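/- Let μ be a positive Radon measure on ℂ satisfying the linear growth condition μ(Q) ≤ C₀ · l(Q) for every square Q, and let Θ > 0. Let C₁, C₁′ be natural numbers, both larger than 1, such that C₁²/C₁′ + 3C₀/C₁ < Θ/2. Then for every square Q with μ(Q) ≥ (Θ/2)·l(Q) there exist two squares Q′ and Q″ contained in Q, each of side length l(Q)/C₁, such that dist(Q′, Q″) ≥ l(Q)/C₁, dist(Q′, Q″) ≤ √2 · l(Q), and min(μ(Q′), μ(Q″)) ≥ l(Q)/C₁′. -/

import Mathlib

open MeasureTheory

/-- The closed axis-parallel square in `ℂ ≅ ℝ²` with center `c` and side length `l`. -/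
def square (c : ℂ) (l : ℝ) : Set ℂ :=
  {w : ℂ | |w.re - c.re| ≤ l / 2 ∧ |w.im - c.im| ≤ l / 2}

/-- The (infimal) Euclidean distance between two subsets of `ℂ`. -/
noncomputable def distSet (s t : Set ℂ) : ℝ := sInf (Set.image2 dist s t)

theorem grid_cover (n : ℕ) (hn : 0 < n) (a s x : ℝ) (hs : 0 < s) (h1 : a ≤ x)
    (h2 : x ≤ a + n * s) : ∃ i : Fin n, |x - (a + ((i : ℕ) + 1 / 2 : ℝ) * s)| ≤ s / 2 := by
  by_cases hx : x < a + n * s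
  · have ht : 0 ≤ (x - a) / s := div_nonneg (by linarith) hs.le
    have hlt : (x - a) / s < n := by rw [div_lt_iff₀ hs]; linarith
    have hf1 := Nat.floor_le ht
    have hf2 := Nat.lt_floor_add_one ((x - a) / s)
    rw [le_div_iff₀ hs] at hf1
    rw [div_lt_iff₀ hs] at hf2
    refine ⟨⟨⌊(x - a) / s⌋₊, (Nat.floor_lt ht).2 hlt⟩, ?_⟩
    rw [abs_le]
    constructor <;> dsimp only <;> linarith
  · have hx' : x = a + n * s := le_antisymm h2 (not_lt.1 hx)
    refine ⟨⟨n - 1, by omega⟩, ?_⟩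
    have : ((n - 1 : ℕ) : ℝ) = n - 1 := by
      rw [Nat.cast_sub hn]; simp
    dsimp only
    rw [this, hx', abs_le]
    constructor <;> linarith

theorem grid_sub (n : ℕ) (a s x : ℝ) (hs : 0 < s) (i : Fin n)
    (h : |x - (a + ((i : ℕ) + 1 / 2 : ℝ) * s)| ≤ s / 2) : a ≤ x ∧ x ≤ a + n * s := by
  have h0 : (0 : ℝ) ≤ (i : ℕ) := Nat.cast_nonneg _
  have h1 : ((i : ℕ) : ℝ) + 1 ≤ n := by exact_mod_cast i.2
  rw [abs_le] at h
  have := mul_le_mul_of_nonneg_right h1 hs.le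
  have := mul_nonneg h0 hs.le
  constructor <;> linarith

theorem grid_near (a s x : ℝ) (hs : 0 < s) (i j : ℕ) (h1 : i ≤ j + 1) (h2 : j ≤ i + 1)
    (h : |x - (a + ((i : ℕ) + 1 / 2 : ℝ) * s)| ≤ s / 2) :
    |x - (a + ((j : ℕ) + 1 / 2 : ℝ) * s)| ≤ 3 * s / 2 := by
  have h1' : (i : ℝ) ≤ j + 1 := by exact_mod_cast h1
  have h2' : (j : ℝ) ≤ i + 1 := by exact_mod_cast h2
  rw [abs_le] at *
  have := mul_le_mul_of_nonneg_right h1' hs.le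
  have := mul_le_mul_of_nonneg_right h2' hs.le
  constructor <;> linarith

theorem grid_far (a s x y : ℝ) (hs : 0 < s) (i j : ℕ) (hij : ¬ (i ≤ j + 1 ∧ j ≤ i + 1))
    (h : |x - (a + ((i : ℕ) + 1 / 2 : ℝ) * s)| ≤ s / 2)
    (h' : |y - (a + ((j : ℕ) + 1 / 2 : ℝ) * s)| ≤ s / 2) : s ≤ |x - y| := by
  rw [abs_le] at h h'
  rw [le_abs]
  have : j + 2 ≤ i ∨ i + 2 ≤ j := by omega
  rcases this with h3 | h3
  · left
    have h3' : (j : ℝ) + 2 ≤ i := by exact_mod_cast h3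
    have := mul_le_mul_of_nonneg_right h3' hs.le
    linarith
  · right
    have h3' : (i : ℝ) + 2 ≤ j := by exact_mod_cast h3
    have := mul_le_mul_of_nonneg_right h3' hs.le
    linarith

theorem dist_le_of_mem_square (c : ℂ) (l : ℝ) (hl : 0 < l) (w z : ℂ) (hw : w ∈ square c l)
    (hz : z ∈ square c l) : dist w z ≤ Real.sqrt 2 * l := by
  obtain ⟨h1, h2⟩ := hw
  obtain ⟨h3, h4⟩ := hz
  rw [abs_le] at h1 h2 h3 h4
  rw [Complex.dist_eq_re_im]
  apply Real.sqrt_le_iff.2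
  refine ⟨by positivity, ?_⟩
  rw [mul_pow, Real.sq_sqrt (by norm_num)]
  have h5 : (w.re - z.re) ^ 2 ≤ l ^ 2 := sq_le_sq' (by linarith) (by linarith)
  have h6 : (w.im - z.im) ^ 2 ≤ l ^ 2 := sq_le_sq' (by linarith) (by linarith)
  linarith

/-- center of the grid square -/
noncomputable def gridCenter (c : ℂ) (l s : ℝ) (i j : ℕ) : ℂ :=
  ⟨(c.re - l / 2) + (i + 1 / 2 : ℝ) * s, (c.im - l / 2) + (j + 1 / 2 : ℝ) * s⟩

/-- If `μ` has linear growth with constant `C₀` and `C₁, C₁′ ∈ ℕ`, both `> 1`, satisfy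
`C₁²/C₁′ + 3C₀/C₁ < Θ/2`, then every square `Q` with `μ(Q) ≥ (Θ/2)·l(Q)` contains two
squares `Q′, Q″` of side length `l(Q)/C₁` with `l(Q)/C₁ ≤ dist(Q′,Q″) ≤ √2·l(Q)` and
`min(μ(Q′), μ(Q″)) ≥ l(Q)/C₁′`. -/
theorem stmt7 (μ : Measure ℂ) [IsLocallyFiniteMeasure μ] (C₀ Θ : ℝ) (hC₀ : 0 < C₀)
    (hΘ : 0 < Θ)
    (growth : ∀ (c : ℂ) (l : ℝ), 0 < l → μ (square c l) ≤ ENNReal.ofReal (C₀ * l))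
    (C₁ C₁' : ℕ) (hC₁ : 1 < C₁) (hC₁' : 1 < C₁')
    (hsmall : (C₁ : ℝ) ^ 2 / (C₁' : ℝ) + 3 * C₀ / (C₁ : ℝ) < Θ / 2) :
    ∀ (c : ℂ) (l : ℝ), 0 < l → ENNReal.ofReal (Θ / 2 * l) ≤ μ (square c l) →
      ∃ c' c'' : ℂ,
        square c' (l / C₁) ⊆ square c l ∧
        square c'' (l / C₁) ⊆ square c l ∧
        l / C₁ ≤ distSet (square c' (l / C₁)) (square c'' (l / C₁)) ∧
        distSet (square c' (l / C₁)) (square c'' (l / C₁)) ≤ Real.sqrt 2 * l ∧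
        ENNReal.ofReal (l / C₁') ≤
          min (μ (square c' (l / C₁))) (μ (square c'' (l / C₁))) := by
  intro c l hl hQ
  have hn : 0 < C₁ := by omega
  have hnR : (0 : ℝ) < C₁ := by exact_mod_cast hn
  have hmR : (0 : ℝ) < C₁' := by exact_mod_cast (by omega : 0 < C₁')
  obtain ⟨s, hsdef⟩ : ∃ s, s = l / C₁ := ⟨_, rfl⟩
  have hs : 0 < s := by rw [hsdef]; positivity
  have hns : C₁ * s = l := by rw [hsdef]; field_simp
  rw [← hsdef]
  let G : Fin C₁ × Fin C₁ → ℂ := fun p => gridCenter c l s p.1 p.2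
  have hsub : ∀ p, square (G p) s ⊆ square c l := by
    rintro p w ⟨h1, h2⟩
    have h1' := grid_sub C₁ (c.re - l / 2) s w.re hs p.1 h1
    have h2' := grid_sub C₁ (c.im - l / 2) s w.im hs p.2 h2
    rw [hns] at h1' h2'
    constructor <;> rw [abs_le] <;> constructor <;> linarith
  let near : Fin C₁ × Fin C₁ → Fin C₁ × Fin C₁ → Prop := fun p q =>
    ((p.1 : ℕ) ≤ q.1 + 1 ∧ (q.1 : ℕ) ≤ p.1 + 1) ∧ ((p.2 : ℕ) ≤ q.2 + 1 ∧ (q.2 : ℕ) ≤ p.2 + 1)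
  have key : ∀ q, ∃ p, ¬ near p q ∧ ENNReal.ofReal (l / C₁') ≤ μ (square (G p) s) := by
    intro q
    by_contra! hcon
    classical
    let F : Finset (Fin C₁ × Fin C₁) := Finset.univ.filter (fun p => ¬ near p q)
    have hcov : square c l ⊆ (⋃ p ∈ F, square (G p) s) ∪ square (G q) (3 * s) := by
      rintro w ⟨h1, h2⟩
      rw [abs_le] at h1 h2
      obtain ⟨i, hi⟩ := grid_cover C₁ hn (c.re - l / 2) s w.re hs (by linarith) (by linarith)
      obtain ⟨j, hj⟩ := grid_cover C₁ hn (c.im - l / 2) s w.im hs (by linarith) (by linarith)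
      by_cases hnr : near (i, j) q
      · right
        exact ⟨grid_near _ _ _ hs _ _ hnr.1.1 hnr.1.2 hi, grid_near _ _ _ hs _ _ hnr.2.1 hnr.2.2 hj⟩
      · left
        simp only [Set.mem_iUnion]
        exact ⟨(i, j), by simp [F, hnr], hi, hj⟩
    have hle : μ (square c l) ≤ ENNReal.ofReal ((C₁ : ℝ) ^ 2 * (l / C₁') + C₀ * (3 * s)) := by
      calc μ (square c l) ≤ μ (⋃ p ∈ F, square (G p) s) + μ (square (G q) (3 * s)) :=
            (measure_mono hcov).trans (measure_union_le _ _)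
        _ ≤ (∑ p ∈ F, μ (square (G p) s)) + ENNReal.ofReal (C₀ * (3 * s)) :=
            add_le_add (measure_biUnion_finset_le _ _) (growth _ _ (by positivity))
        _ ≤ (∑ p ∈ F, ENNReal.ofReal (l / C₁')) + ENNReal.ofReal (C₀ * (3 * s)) := by
            gcongr with p hp
            exact (hcon p (Finset.mem_filter.1 hp).2).le
        _ ≤ (∑ p : Fin C₁ × Fin C₁, ENNReal.ofReal (l / C₁')) + ENNReal.ofReal (C₀ * (3 * s)) := by
            gcongr
            exact Finset.subset_univ _
        _ = _ := by
            rw [← ENNReal.ofReal_sum_of_nonneg (fun _ _ => by positivity),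
              ← ENNReal.ofReal_add (Finset.sum_nonneg fun _ _ => by positivity) (by positivity)]
            congr 2
            rw [Finset.sum_const, Finset.card_univ, Fintype.card_prod, Fintype.card_fin, nsmul_eq_mul]
            push_cast
            ring
    have hlt := hQ.trans hle
    rw [ENNReal.ofReal_le_ofReal_iff (by positivity)] at hlt
    have := mul_lt_mul_of_pos_right hsmall hl
    have he : (C₁ : ℝ) ^ 2 * (l / C₁') + C₀ * (3 * s)
        = ((C₁ : ℝ) ^ 2 / (C₁' : ℝ) + 3 * C₀ / (C₁ : ℝ)) * l := by
      rw [hsdef]; ring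
    linarith
  have hcen : ∀ p, G p ∈ square (G p) s := by
    intro p
    constructor <;> simp only [sub_self, abs_zero] <;> positivity
  obtain ⟨q, -, hq⟩ := key (⟨0, hn⟩, ⟨0, hn⟩)
  obtain ⟨p, hpq, hp⟩ := key q
  refine ⟨G p, G q, hsub p, hsub q, ?_, ?_, le_min hp hq⟩
  · apply le_csInf
    · exact ⟨_, Set.mem_image2_of_mem (hcen p) (hcen q)⟩
    · rintro _ ⟨w, ⟨hw1, hw2⟩, z, ⟨hz1, hz2⟩, rfl⟩
      rw [Complex.dist_eq]
      rcases not_and_or.1 hpq with h | h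
      · refine (grid_far _ _ _ _ hs _ _ h hw1 hz1).trans ?_
        simpa using Complex.abs_re_le_norm (w - z)
      · refine (grid_far _ _ _ _ hs _ _ h hw2 hz2).trans ?_
        simpa using Complex.abs_im_le_norm (w - z)
  · refine (csInf_le ⟨0, ?_⟩ (Set.mem_image2_of_mem (hcen p) (hcen q))).trans
      (dist_le_of_mem_square c l hl _ _ (hsub p (hcen p)) (hsub q (hcen q)))
    rintro _ ⟨w, -, z, -, rfl⟩
    exact dist_nonneg
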